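/- arXiv:1610.03537 — 3 statements merged into one kernel-verified Lean document; each statement's English description precedes it below -/
import Mathlib

section
/- Let (X,T) be a minimal Cantor system and let S be a bounded speedup of T with jump function p, and suppose S is minimal. Suppose there are a positive integer c and a continuous function g : X → ℤ such that p(x) = c + g(S(x)) − g(x) for all x ∈ X. Define h : X → X by h(x) = T^{−g(x)}(x). Then h is continuous, h∘S = T^c∘h, the image h(X) is invariant under T^c, and T^c restricted to h(X) is a minimal Cantor system, so h is a factor map from (X,S) onto (h(X), T^c). Furthermore, if T^c : X → X is itself minimal, then h is a homeomorphism of X and is a topological conjugacy from (X,S) to (X,T^c). -/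
/-- A minimal Cantor-type dynamical system: every `T`-orbit (over `ℤ`) is dense. -/
def IsMinimalHomeo {X : Type*} [TopologicalSpace X] (T : Equiv.Perm X) : Prop :=
  ∀ x : X, Dense (Set.range fun n : ℤ => (T ^ n) x)

/-!
The cohomological equation says exactly that `h` intertwines `S` with `T ^ c`, so the first four
claims are formal, and minimality of `T ^ c` makes the compact range of `h` everything. Injectivity
is a counting argument. Along the `T`-orbit of `x`, the map `h` is described by
`f n = n - g (T ^ n x)`, a surjection `ℤ → ℤ` at bounded distance from the identity. By counting in
long intervals, only finitely many fibres of `f` have more than one point. But `S` induces an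
injection `σ` of `ℤ` with `f ∘ σ = f + c`, so the values with such fibres are closed under
translation by `c ≠ 0`, and there are none.
-/

open Function Set

section Integers

variable {f s σ : ℤ → ℤ} {B c : ℤ}

theorem finite_compl_range_of_injective_of_abs_sub_le (hs : Injective s)
    (hB : ∀ n, |s n - n| ≤ B) : (range s)ᶜ.Finite := by
  by_contra hinf
  obtain ⟨F, hF, hcard⟩ := Set.Infinite.exists_subset_card_eq hinf (2 * B.toNat + 1)
  let N : ℕ := F.sup Int.natAbs
  have hFN : ∀ m ∈ F, |m| ≤ N := fun m hm => by
    rw [Int.abs_eq_natAbs]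
    exact_mod_cast Finset.le_sup (f := Int.natAbs) hm
  have hB0 : 0 ≤ B := (abs_nonneg _).trans (hB 0)
  have hdisj : Disjoint F ((Finset.Icc (-N : ℤ) N).image s) := by
    rw [Finset.disjoint_left]
    intro m hm hms
    obtain ⟨n, -, rfl⟩ := Finset.mem_image.mp hms
    exact hF hm (mem_range_self n)
  have hsub : F ∪ (Finset.Icc (-N : ℤ) N).image s ⊆ Finset.Icc (-(N + B) : ℤ) (N + B) := by
    intro m hm
    rw [Finset.mem_Icc, ← abs_le]
    rcases Finset.mem_union.mp hm with hm | hm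
    · linarith [hFN m hm]
    · obtain ⟨n, hn, rfl⟩ := Finset.mem_image.mp hm
      linarith [abs_le.mpr (Finset.mem_Icc.mp hn), hB n, abs_sub_abs_le_abs_sub (s n) n]
  have hle := Finset.card_le_card hsub
  rw [Finset.card_union_of_disjoint hdisj, Finset.card_image_of_injective _ hs, hcard,
    Int.card_Icc, Int.card_Icc] at hle
  omega

theorem finite_setOf_nontrivial_fiber_of_surjective_of_abs_sub_le (hf : Surjective f)
    (hB : ∀ n, |f n - n| ≤ B) : {m | (f ⁻¹' {m}).Nontrivial}.Finite := by
  obtain ⟨s, hs⟩ := hf.hasRightInverse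
  have hsB : ∀ m, |s m - m| ≤ B := fun m => by
    simpa only [hs m, abs_sub_comm] using hB (s m)
  refine ((finite_compl_range_of_injective_of_abs_sub_le hs.injective hsB).image f).subset ?_
  intro m hm
  obtain ⟨t, rfl, hts⟩ := hm.exists_ne (s m)
  refine ⟨t, ?_, rfl⟩
  rintro ⟨m, rfl⟩
  exact hts (by rw [hs m])

theorem injective_of_surjective_of_semiconj_add (hc : c ≠ 0) (hf : Surjective f)
    (hB : ∀ n, |f n - n| ≤ B) (hσ : Injective σ) (hfσ : Semiconj f σ (· + c)) :
    Injective f := by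
  set D := {m | (f ⁻¹' {m}).Nontrivial}
  have hD : MapsTo (· + c) D D := by
    rintro m ⟨a, rfl, b, hb, hab⟩
    exact ⟨σ a, hfσ a, σ b, (hfσ b).trans (congrArg (· + c) hb), hσ.ne hab⟩
  intro a b hab
  by_contra hne
  have hmem : ∀ n : ℕ, f a + n • c ∈ D := fun n => by
    simpa only [add_right_iterate] using hD.iterate n ⟨a, rfl, b, hab.symm, hne⟩
  have htranslates : Injective fun n : ℕ => f a + n • c := fun m n hmn => by
    simpa [hc] using hmn
  exact infinite_of_injective_forall_mem htranslates hmem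
    (finite_setOf_nontrivial_fiber_of_surjective_of_abs_sub_le hf hB)

end Integers

section JumpMap

variable {X : Type*} {T : Equiv.Perm X} {k p : X → ℤ} {c : ℤ}

/-- The map `x ↦ T ^ k x x` moving each point along its `T`-orbit by the amount `k`. Both the
speedup `S` (with `k = p`) and the factor map `h` (with `k = -g`) have this form. -/
def jumpMap (T : Equiv.Perm X) (k : X → ℤ) (x : X) : X :=
  (T ^ k x) x

/-- The action of `jumpMap T k` on the `T`-orbit of `x`, lifted to the exponents of the
parametrization `n ↦ T ^ n x` (so that periodic orbits need no special treatment). -/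
def orbitJump (T : Equiv.Perm X) (k : X → ℤ) (x : X) (n : ℤ) : ℤ :=
  n + k ((T ^ n) x)

theorem zpow_orbitJump_apply (T : Equiv.Perm X) (k : X → ℤ) (x : X) (n : ℤ) :
    (T ^ orbitJump T k x n) x = jumpMap T k ((T ^ n) x) := by
  rw [orbitJump, add_comm, zpow_add, Equiv.Perm.mul_apply, jumpMap]

theorem injective_orbitJump (hk : Injective (jumpMap T k)) (x : X) :
    Injective (orbitJump T k x) := by
  intro m n hmn
  have hpt : (T ^ m) x = (T ^ n) x :=
    hk (by rw [← zpow_orbitJump_apply, ← zpow_orbitJump_apply, hmn])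
  rw [orbitJump, orbitJump, hpt] at hmn
  exact add_right_cancel hmn

theorem surjective_orbitJump (hk : Surjective (jumpMap T k)) (x : X) :
    Surjective (orbitJump T k x) := by
  intro m
  obtain ⟨z, hz⟩ := hk ((T ^ m) x)
  have hzx : (T ^ (m - k z)) x = z := by
    rw [sub_eq_neg_add, zpow_add, Equiv.Perm.mul_apply, ← hz, zpow_neg, Equiv.Perm.inv_eq_iff_eq,
      jumpMap]
  exact ⟨m - k z, by rw [orbitJump, hzx, sub_add_cancel]⟩

theorem injective_jumpMap_of_injective_orbitJump (hk : ∀ x, Injective (orbitJump T k x)) :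
    Injective (jumpMap T k) := by
  intro x y hxy
  have hy : (T ^ (k x - k y)) x = y := by
    rw [sub_eq_neg_add, zpow_add, Equiv.Perm.mul_apply, zpow_neg, Equiv.Perm.inv_eq_iff_eq]
    exact hxy
  have hxy0 : k x - k y = 0 := hk x (by simp [orbitJump, hy])
  simpa [hxy0] using hy

theorem semiconj_jumpMap (hpk : ∀ x, p x = c + k x - k (jumpMap T p x)) :
    Semiconj (jumpMap T k) (jumpMap T p) ⇑(T ^ c) := by
  intro x
  have hexp : k (jumpMap T p x) + p x = c + k x := by rw [hpk]; ring
  calc jumpMap T k (jumpMap T p x)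
      = (T ^ (k (jumpMap T p x) + p x)) x := by rw [zpow_add]; rfl
    _ = (T ^ c) (jumpMap T k x) := by rw [hexp, zpow_add]; rfl

theorem semiconj_orbitJump (hpk : ∀ x, p x = c + k x - k (jumpMap T p x)) (x : X) :
    Semiconj (orbitJump T k x) (orbitJump T p x) (· + c) := by
  intro n
  rw [orbitJump, zpow_orbitJump_apply, orbitJump, orbitJump, hpk]
  ring

theorem injective_jumpMap_of_surjective {B : ℤ} (hc : c ≠ 0) (hB : ∀ x, |k x| ≤ B)
    (hp : Injective (jumpMap T p)) (hpk : ∀ x, p x = c + k x - k (jumpMap T p x))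
    (hk : Surjective (jumpMap T k)) : Injective (jumpMap T k) :=
  injective_jumpMap_of_injective_orbitJump fun x =>
    injective_of_surjective_of_semiconj_add hc (surjective_orbitJump hk x)
      (fun n => by simpa only [orbitJump, add_sub_cancel_left] using hB ((T ^ n) x))
      (injective_orbitJump hp x) (semiconj_orbitJump hpk x)

end JumpMap

section Dynamics

variable {X Y : Type*}

theorem continuous_perm_zpow [TopologicalSpace X] {T : Equiv.Perm X} (hT : Continuous T)
    (hT' : Continuous T.symm) : ∀ n : ℤ, Continuous ⇑(T ^ n)
  | .ofNat n => by simpa [Equiv.Perm.coe_pow] using hT.iterate n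
  | .negSucc n => by
    rw [zpow_negSucc, ← inv_pow, Equiv.Perm.coe_pow]
    exact Continuous.iterate hT' _

theorem continuous_jumpMap [TopologicalSpace X] {T : Equiv.Perm X} {k : X → ℤ}
    (hT : Continuous T) (hT' : Continuous T.symm) (hk : Continuous k) :
    Continuous (jumpMap T k) := by
  have heval : Continuous fun q : ℤ × X => (T ^ q.1) q.2 :=
    continuous_prod_of_discrete_left.mpr (continuous_perm_zpow hT hT')
  exact heval.comp (hk.prodMk continuous_id)

theorem semiconj_perm_zpow {S : Equiv.Perm X} {R : Equiv.Perm Y} {h : X → Y}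
    (hSR : Semiconj h S R) : ∀ n : ℤ, Semiconj h ⇑(S ^ n) ⇑(R ^ n)
  | .ofNat n => by simpa [Equiv.Perm.coe_pow] using hSR.iterate_right n
  | .negSucc n => by
    have hinv : Semiconj h ⇑S⁻¹ ⇑R⁻¹ := hSR.inverses_right S.right_inv R.left_inv
    simpa only [zpow_negSucc, ← inv_pow, Equiv.Perm.coe_pow] using hinv.iterate_right (n + 1)

variable [TopologicalSpace X] [TopologicalSpace Y] {S : Equiv.Perm X} {R : Equiv.Perm Y}
  {h : X → Y}

theorem range_subset_closure_orbit_of_semiconj (hh : Continuous h) (hSR : Semiconj h S R) {x : X}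
    (hx : Dense (range fun n : ℤ => (S ^ n) x)) :
    range h ⊆ closure (range fun n : ℤ => (R ^ n) (h x)) := by
  have horbit : h ∘ (fun n : ℤ => (S ^ n) x) = fun n : ℤ => (R ^ n) (h x) :=
    funext fun n => semiconj_perm_zpow hSR n x
  simpa only [← range_comp, horbit] using hh.range_subset_closure_image_dense hx

theorem IsMinimalHomeo.surjective_of_semiconj [Nonempty X] [CompactSpace X] [T2Space Y]
    (hR : IsMinimalHomeo R) (hh : Continuous h) (hSR : Semiconj h S R) : Surjective h := by
  inhabit X
  have horbit : (range fun n : ℤ => (R ^ n) (h default)) ⊆ range h := by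
    rintro _ ⟨n, rfl⟩
    exact ⟨(S ^ n) default, semiconj_perm_zpow hSR n default⟩
  have hdense : Dense (range h) := (hR (h default)).mono horbit
  exact range_eq_univ.mp ((isCompact_range hh).isClosed.closure_eq ▸ hdense.closure_eq)

end Dynamics

theorem boundedSpeedup_S_coboundary_factor_general
    {X : Type*} [TopologicalSpace X] [CompactSpace X] [T2Space X]
    (T : Equiv.Perm X) (hTc : Continuous T) (hTc' : Continuous T.symm)
    (p : X → ℤ) (S : Equiv.Perm X) (hSp : ∀ x, S x = (T ^ p x) x) (hSmin : IsMinimalHomeo S)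
    (c : ℤ) (hc : c ≠ 0) (g : X → ℤ) (hg : Continuous g)
    (hpg : ∀ x, p x = c + g (S x) - g x)
    (h : X → X) (hdef : ∀ x, h x = (T ^ (-(g x))) x) :
    Continuous h ∧
    (∀ x, h (S x) = (T ^ c) (h x)) ∧
    (⇑(T ^ c)) '' range h = range h ∧
    (∀ y ∈ range h, range h ⊆ closure (range fun n : ℤ => ((T ^ c) ^ n) y)) ∧
    (IsMinimalHomeo (T ^ c) →
      Bijective h ∧ ∃ φ : X ≃ₜ X, (∀ x, φ x = h x) ∧ ∀ x, φ (S x) = (T ^ c) (φ x)) := by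
  obtain rfl : h = jumpMap T (-g) := funext hdef
  have hS : ⇑S = jumpMap T p := funext hSp
  have hpk : ∀ x, p x = c + (-g) x - (-g) (jumpMap T p x) := fun x => by
    rw [hpg, ← hS, Pi.neg_apply, Pi.neg_apply]; ring
  have hcont : Continuous (jumpMap T (-g)) := continuous_jumpMap hTc hTc' hg.neg
  have hsemi : Semiconj (jumpMap T (-g)) S ⇑(T ^ c) := hS ▸ semiconj_jumpMap hpk
  refine ⟨hcont, hsemi, ?_, ?_, fun hmin => ?_⟩
  · rw [← range_comp, ← hsemi.comp_eq, S.surjective.range_comp]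
  · rintro _ ⟨x, rfl⟩
    exact range_subset_closure_orbit_of_semiconj hcont hsemi (hSmin x)
  · obtain ⟨B, hB⟩ := (isCompact_range hg.neg.abs).bddAbove
    have hsurj : Surjective (jumpMap T (-g)) := fun y =>
      have : Nonempty X := ⟨y⟩
      hmin.surjective_of_semiconj hcont hsemi y
    have hbij : Bijective (jumpMap T (-g)) :=
      ⟨injective_jumpMap_of_surjective hc (fun x => hB ⟨x, rfl⟩) (hS ▸ S.injective) hpk hsurj,
        hsurj⟩
    exact ⟨hbij, hcont.homeoOfEquivCompactToT2 (f := .ofBijective _ hbij), fun _ => rfl, hsemi⟩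

/-- Let `S` be a minimal bounded speedup of a minimal Cantor system `(X,T)`
with jump function `p`, and suppose `p x = c + g (S x) - g x` for a positive integer `c` and a
continuous `g : X → ℤ`.  Then `h x := T^(-g x) x` is continuous, `h ∘ S = T^c ∘ h`, the image
of `h` is `T^c`-invariant, `T^c` restricted to `h(X)` is minimal (every orbit is dense in
`h(X)`), and if moreover `T^c` is minimal on all of `X`, then `h` is a bijection giving a
topological conjugacy from `(X,S)` to `(X,T^c)`. -/
theorem boundedSpeedup_S_coboundary_factor
    {X : Type*} [TopologicalSpace X] [CompactSpace X]
    [TopologicalSpace.MetrizableSpace X] [TotallyDisconnectedSpace X] [PerfectSpace X]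
    [Nonempty X]
    (T : Equiv.Perm X) (hTc : Continuous T) (hTc' : Continuous T.symm)
    (hTmin : IsMinimalHomeo T)
    (p : X → ℕ) (hp1 : ∀ x, 1 ≤ p x) (hpbdd : ∃ M : ℕ, ∀ x, p x ≤ M)
    (S : Equiv.Perm X) (hSc : Continuous S) (hSc' : Continuous S.symm)
    (hSp : ∀ x, S x = (T ^ p x) x) (hSmin : IsMinimalHomeo S)
    (c : ℕ) (hcpos : 0 < c)
    (g : X → ℤ) (hg : Continuous g)
    (hpg : ∀ x, (p x : ℤ) = c + g (S x) - g x)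
    (h : X → X) (hdef : ∀ x, h x = (T ^ (-(g x))) x) :
    Continuous h ∧
    (∀ x, h (S x) = (T ^ c) (h x)) ∧
    (⇑(T ^ c)) '' Set.range h = Set.range h ∧
    (∀ y ∈ Set.range h,
      Set.range h ⊆ closure (Set.range fun n : ℤ => ((T ^ c) ^ n) y)) ∧
    (IsMinimalHomeo (T ^ c) →
      Function.Bijective h ∧
        ∃ φ : X ≃ₜ X, (∀ x, φ x = h x) ∧ ∀ x, φ (S x) = (T ^ c) (φ x)) := by
  simpa only [zpow_natCast] using boundedSpeedup_S_coboundary_factor_general T hTc hTc'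
    (fun x => p x) S (by simpa only [zpow_natCast] using hSp) hSmin c (by exact_mod_cast hcpos.ne')
    g hg hpg h hdef
end

section
/- Let (X,T) be a minimal Cantor system and let S be a minimal bounded speedup of T. If the topological entropy of T is zero, then the topological entropy of S is zero. -/
/-!
A minimal homeomorphism `T` of a perfect Hausdorff space has no periodic points, so the jump
function `p` is determined by `T` and `S`; its finitely many fibres `{x | S x = T^[k] x}` are
closed, hence `p` is continuous, and uniformly so by compactness. Therefore `p` agrees on
sufficiently close points: two `T`-orbits that stay close up to time `M * n`, where `p ≤ M`, make
the same jumps, and their `S`-orbits stay close up to time `n`. Counting covers gives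
`h(S) ≤ M * h(T)`.
-/

open Set Function Uniformity Dynamics ExpGrowth

theorem finite_range_zpow_apply_of_mem_periodicPts {X : Type*} {T : Equiv.Perm X} {x : X}
    (hx : x ∈ periodicPts T) : (range fun n : ℤ => (T ^ n) x).Finite := by
  obtain ⟨k, hk, hkx⟩ := hx
  have hTk : (T ^ k) x = x := by rwa [← Equiv.Perm.iterate_eq_pow]
  have hperiodic : Periodic (fun n : ℤ => (T ^ n) x) k := fun n => by
    simp only [zpow_add, zpow_natCast, Equiv.Perm.mul_apply, hTk]
  rw [← hperiodic.image_Ioc (by exact_mod_cast hk) 0]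
  exact (finite_Ioc _ _).image _

theorem IsMinimalHomeo.periodicPts_eq_empty {X : Type*} [TopologicalSpace X] [T1Space X]
    [PerfectSpace X] {T : Equiv.Perm X} (hT : IsMinimalHomeo T) : periodicPts T = ∅ := by
  refine eq_empty_of_forall_notMem fun x hx => ?_
  have hdense := (hT x).sdiff_finite (finite_range_zpow_apply_of_mem_periodicPts hx)
  rw [sdiff_self] at hdense
  exact not_nonempty_empty (hdense.nonempty_iff.2 ⟨x⟩)

theorem injective_iterate_apply_of_periodicPts_eq_empty {α : Type*} {f : α → α}
    (hf : periodicPts f = ∅) (x : α) : Injective fun n : ℕ => f^[n] x := by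
  refine Injective.of_lt_imp_ne fun i j hij heq => ?_
  have hperiodic : f^[i] x ∈ periodicPts f := by
    refine ⟨j - i, Nat.sub_pos_of_lt hij, ?_⟩
    rw [IsPeriodicPt, IsFixedPt, ← iterate_add_apply, Nat.sub_add_cancel hij.le]
    exact heq.symm
  exact hf.le hperiodic

theorem continuous_of_finite_range_of_isClosed_fiber {X Y : Type*} [TopologicalSpace X]
    [TopologicalSpace Y] {f : X → Y} (hfin : (range f).Finite)
    (hclosed : ∀ y, IsClosed (f ⁻¹' {y})) : Continuous f := by
  refine continuous_iff_isClosed.2 fun s _ => ?_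
  rw [← preimage_inter_range, ← biUnion_preimage_singleton]
  exact (hfin.subset inter_subset_right).isClosed_biUnion fun y _ => hclosed y

theorem birkhoffSum_le_nsmul {α R : Type*} [AddCommMonoid R] [PartialOrder R]
    [IsOrderedAddMonoid R] (f : α → α) {g : α → R} {C : R} (hg : ∀ x, g x ≤ C) (n : ℕ) (x : α) :
    birkhoffSum f g n x ≤ n • C := by
  simpa only [birkhoffSum, Finset.card_range] using
    Finset.sum_le_card_nsmul (Finset.range n) (fun k => g (f^[k] x)) C fun _ _ => hg _

theorem birkhoffSum_lt_mul {α : Type*} (f : α → α) {g : α → ℕ} {M : ℕ} (hM : M ≠ 0)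
    (hg : ∀ x, g x ≤ M) {i n : ℕ} (hin : i < n) (x : α) : birkhoffSum f g i x < M * n :=
  calc birkhoffSum f g i x
      ≤ i * M := birkhoffSum_le_nsmul f hg i x
    _ = M * i := mul_comm i M
    _ < M * n := Nat.mul_lt_mul_of_pos_left hin hM.pos

section DynamicalCovers

variable {X : Type*} {T S : X → X} {F : Set X} {U V : SetRel X X} {m n M : ℕ}

theorem coverMincard_le_of_dynEntourage_subset (h : dynEntourage T V m ⊆ dynEntourage S U n) :
    coverMincard S F U n ≤ coverMincard T F V m :=
  biInf_mono fun _ hs => SetRel.IsCover.mono_entourage h hs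

theorem coverEntropyEntourage_le_mul_of_dynEntourage_subset (hM : M ≠ 0)
    (h : ∀ n, dynEntourage T V (M * n) ⊆ dynEntourage S U n) :
    coverEntropyEntourage S F U ≤ M * coverEntropyEntourage T F V := by
  have hmono : Monotone fun n : ℕ => (coverMincard T F V n : ENNReal) := fun _ _ hmn =>
    ENat.toENNReal_mono (coverMincard_monotone_time T F V hmn)
  calc coverEntropyEntourage S F U
      ≤ expGrowthSup fun n : ℕ => (coverMincard T F V (M * n) : ENNReal) :=
        expGrowthSup_monotone fun n =>
          ENat.toENNReal_mono (coverMincard_le_of_dynEntourage_subset (h n))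
    _ = M * coverEntropyEntourage T F V := hmono.expGrowthSup_comp_mul hM

end DynamicalCovers

/-- `S` is the speedup of `T` with jump function `p`. The jumps may vanish, and neither map need be
invertible. -/
def IsSpeedup {X : Type*} (T S : X → X) (p : X → ℕ) : Prop :=
  ∀ x, S x = T^[p x] x

namespace IsSpeedup

variable {X : Type*} {T S : X → X} {p : X → ℕ} {M : ℕ}

theorem preimage_singleton_eq (h : IsSpeedup T S p) (hT : periodicPts T = ∅) (k : ℕ) :
    p ⁻¹' {k} = {x | S x = T^[k] x} := by
  ext x
  rw [mem_preimage, mem_singleton_iff, mem_ofPred_eq, h x]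
  exact (injective_iterate_apply_of_periodicPts_eq_empty hT x).eq_iff.symm

theorem continuous_jump [TopologicalSpace X] [T2Space X] (h : IsSpeedup T S p)
    (hT : periodicPts T = ∅) (hTc : Continuous T) (hSc : Continuous S) (hpM : ∀ x, p x ≤ M) :
    Continuous p := by
  refine continuous_of_finite_range_of_isClosed_fiber
    ((finite_Iic M).subset (range_subset_iff.2 hpM)) fun k => ?_
  rw [h.preimage_singleton_eq hT]
  exact isClosed_eq hSc (hTc.iterate k)

theorem iterate_apply (h : IsSpeedup T S p) (n : ℕ) (x : X) :
    S^[n] x = T^[birkhoffSum S p n x] x := by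
  induction n with
  | zero => rfl
  | succ n ih =>
    rw [iterate_succ_apply', h, birkhoffSum_succ, add_comm, iterate_add_apply, ← ih]

variable {U V : SetRel X X}

theorem birkhoffSum_jump_eq (h : IsSpeedup T S p) (hM : M ≠ 0) (hpM : ∀ x, p x ≤ M)
    (hV : ∀ x y, (x, y) ∈ V → p x = p y) {n : ℕ} {x y : X}
    (hxy : (x, y) ∈ dynEntourage T V (M * n)) :
    birkhoffSum S p n x = birkhoffSum S p n y := by
  induction n with
  | zero => rfl
  | succ n ih =>
    have hsum : birkhoffSum S p n x = birkhoffSum S p n y :=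
      ih (dynEntourage_antitone T V (Nat.mul_le_mul_left M n.le_succ) hxy)
    have htime : birkhoffSum S p n x < M * (n + 1) :=
      birkhoffSum_lt_mul S hM hpM n.lt_succ_self x
    have hjump : p (S^[n] x) = p (S^[n] y) := by
      rw [h.iterate_apply, h.iterate_apply, ← hsum]
      exact hV _ _ (mem_dynEntourage.1 hxy _ htime)
    rw [birkhoffSum_succ, birkhoffSum_succ, hsum, hjump]

theorem dynEntourage_subset (h : IsSpeedup T S p) (hM : M ≠ 0) (hpM : ∀ x, p x ≤ M)
    (hV : ∀ x y, (x, y) ∈ V → p x = p y) (n : ℕ) :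
    dynEntourage T V (M * n) ⊆ dynEntourage S V n := by
  rintro ⟨x, y⟩ hxy
  refine mem_dynEntourage.2 fun i hi => ?_
  have htime : birkhoffSum S p i x < M * n := birkhoffSum_lt_mul S hM hpM hi x
  have hsum : birkhoffSum S p i x = birkhoffSum S p i y :=
    h.birkhoffSum_jump_eq hM hpM hV
      (dynEntourage_antitone T V (Nat.mul_le_mul_left M hi.le) hxy)
  rw [h.iterate_apply, h.iterate_apply, ← hsum]
  exact mem_dynEntourage.1 hxy _ htime

theorem coverEntropy_le [UniformSpace X] (h : IsSpeedup T S p) (hp : UniformContinuous p)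
    (hM : M ≠ 0) (hpM : ∀ x, p x ≤ M) (F : Set X) :
    coverEntropy S F ≤ M * coverEntropy T F := by
  refine iSup₂_le fun U hU => ?_
  have hpV : {q : X × X | p q.1 = p q.2} ∈ 𝓤 X :=
    hp (DiscreteUniformity.relId_mem_uniformity ℕ)
  set V : SetRel X X := U ∩ {q : X × X | p q.1 = p q.2}
  have hV : V ∈ 𝓤 X := Filter.inter_mem hU hpV
  have hsub (n : ℕ) : dynEntourage T V (M * n) ⊆ dynEntourage S U n :=
    (h.dynEntourage_subset hM hpM (fun _ _ hxy => hxy.2) n).trans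
      (dynEntourage_monotone S n inter_subset_left)
  calc coverEntropyEntourage S F U
      ≤ M * coverEntropyEntourage T F V :=
        coverEntropyEntourage_le_mul_of_dynEntourage_subset hM hsub
    _ ≤ M * coverEntropy T F := by
        gcongr
        exact coverEntropyEntourage_le_coverEntropy T F hV

end IsSpeedup

theorem boundedSpeedup_entropy_zero_general {X : Type*} [UniformSpace X] [CompactSpace X]
    [T2Space X] {T S : X → X} {p : X → ℕ} {M : ℕ} {F : Set X} (h : IsSpeedup T S p)
    (hT : periodicPts T = ∅) (hTc : Continuous T) (hSc : Continuous S) (hpM : ∀ x, p x ≤ M)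
    (hT0 : coverEntropy T F = 0) : coverEntropy S F = 0 := by
  have hF : F.Nonempty := nonempty_iff_ne_empty.2 fun hF => by simp [hF] at hT0
  have hp : UniformContinuous p :=
    CompactSpace.uniformContinuous_of_continuous (h.continuous_jump hT hTc hSc hpM)
  have hle : coverEntropy S F ≤ (M + 1 : ℕ) * coverEntropy T F :=
    h.coverEntropy_le hp M.succ_ne_zero (fun x => (hpM x).trans M.le_succ) F
  rw [hT0, mul_zero] at hle
  exact hle.antisymm (coverEntropy_nonneg S hF)

/-- If `S` is a minimal bounded speedup of a minimal Cantor system `(X,T)`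
and `h(T) = 0`, then `h(S) = 0`. -/
theorem boundedSpeedup_entropy_zero
    {X : Type*} [MetricSpace X] [CompactSpace X]
    [TotallyDisconnectedSpace X] [PerfectSpace X] [Nonempty X]
    (T : Equiv.Perm X) (hTc : Continuous T) (hTc' : Continuous T.symm)
    (hTmin : IsMinimalHomeo T)
    (p : X → ℕ) (hp1 : ∀ x, 1 ≤ p x) (hpbdd : ∃ M : ℕ, ∀ x, p x ≤ M)
    (S : Equiv.Perm X) (hSc : Continuous S) (hSc' : Continuous S.symm)
    (hSp : ∀ x, S x = (T ^ p x) x) (hSmin : IsMinimalHomeo S)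
    (hT0 : Dynamics.coverEntropy (⇑T) Set.univ = 0) :
    Dynamics.coverEntropy (⇑S) Set.univ = 0 := by
  obtain ⟨M, hpM⟩ := hpbdd
  have hspeedup : IsSpeedup T S p := fun x => by rw [hSp, Equiv.Perm.iterate_eq_pow]
  exact boundedSpeedup_entropy_zero_general hspeedup hTmin.periodicPts_eq_empty hTc hSc hpM hT0
end

section
/- Let (X,T) be an odometer system and let S be a bounded speedup of T with jump function p which is minimal, and let c be the orbit number of the speedup. Then p − c is an S-coboundary: there exists a continuous function f : X → ℤ such that p(x) − c = f(x) − f(S(x)) for all x ∈ X. -/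
/-- The (two-sided) orbit of a point under a bijection. -/
def zOrbit {X : Type*} (T : Equiv.Perm X) (x : X) : Set X :=
  Set.range fun n : ℤ => (T ^ n) x

/-- `c` is the orbit number of the speedup `S` of `T`: every `T`-orbit is the union of
exactly `c` distinct `S`-orbits. -/
def IsOrbitNumber {X : Type*} (T S : Equiv.Perm X) (c : ℕ) : Prop :=
  0 < c ∧ ∀ x : X,
    {O : Set X | (∃ y : X, O = zOrbit S y) ∧ O ⊆ zOrbit T x}.ncard = c


/-- Odometer data for `(X,T)`: nested cyclic Kakutani–Rokhlin partitions
`P(k) = {T^i A(k) : 0 ≤ i < m k}` which refine each other and separate points. -/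
def IsOdometerData {X : Type*} [TopologicalSpace X] (T : Equiv.Perm X)
    (m : ℕ → ℕ) (A : ℕ → Set X) : Prop :=
  (2 ≤ m 0) ∧ (∀ k, m k ∣ m (k + 1)) ∧ (∀ k, 2 * m k ≤ m (k + 1)) ∧
  (∀ k, (A k).Nonempty ∧ IsClopen (A k)) ∧
  (∀ k, ∀ i < m k, ∀ j < m k, i ≠ j →
    Disjoint ((⇑(T ^ i)) '' A k) ((⇑(T ^ j)) '' A k)) ∧
  (∀ k, (⋃ i < m k, (⇑(T ^ i)) '' A k) = Set.univ) ∧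
  (∀ k, (⇑(T ^ m k)) '' A k = A k) ∧
  (∀ k, ∀ i < m (k + 1), ∃ j < m k, (⇑(T ^ i)) '' A (k + 1) ⊆ (⇑(T ^ j)) '' A k) ∧
  (∀ x y : X, x ≠ y → ∃ k, ∀ i < m k,
    ¬(x ∈ (⇑(T ^ i)) '' A k ∧ y ∈ (⇑(T ^ i)) '' A k))

/-!
Choose a tower of the odometer, of height `N`, fine enough that the jump function `p` is constant on
its levels. By minimality `S` permutes the `N` levels cyclically, so the Birkhoff sum of `p` over
`N` steps of `S` is the sum of `p` over all levels: a constant, and a multiple `N * e` of `N` since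
`S ^ N` fixes every level. Hence `S ^ N = T ^ (N * e)`. Each `S`-orbit inside a `T`-orbit meets a
given level in exactly one orbit of `T ^ (N * e)`, and the `T ^ N`-orbit which the `T`-orbit cuts
out on that level splits into `e` of these, so `e = c`. Thus `p - c` has vanishing Birkhoff sums
over `N` steps, and averaging its shorter Birkhoff sums gives a transfer function.
-/

section Coboundary

variable {X : Type*}

lemma sum_birkhoffSum_apply {M : Type*} [AddCommGroup M] (S : X → X) (h : X → M) (N : ℕ) (x : X) :
    ∑ n ∈ Finset.range N, birkhoffSum S h n (S x) =
      ∑ n ∈ Finset.range N, birkhoffSum S h n x + birkhoffSum S h N x - N • h x := by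
  have hshift : ∀ n, birkhoffSum S h n (S x) = birkhoffSum S h (n + 1) x - h x := fun n => by
    rw [birkhoffSum_succ', add_sub_cancel_left]
  simp only [hshift, Finset.sum_sub_distrib, Finset.sum_const, Finset.card_range]
  rw [← Finset.sum_range_succ, Finset.sum_range_succ', birkhoffSum_zero, add_zero]

lemma exists_continuous_coboundary_of_birkhoffSum_eq_zero [TopologicalSpace X] {S : X → X}
    (hS : Continuous S) {h : X → ℤ} (hh : Continuous h) {N : ℕ} (hN : N ≠ 0)
    (hsum : ∀ x, birkhoffSum S h N x = 0) :
    ∃ f : X → ℤ, Continuous f ∧ ∀ x, h x = f x - f (S x) := by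
  have hcont : Continuous fun x => ∑ n ∈ Finset.range N, birkhoffSum S h n x :=
    continuous_finsetSum _ fun n _ => continuous_finsetSum _ fun k _ => hh.comp (hS.iterate k)
  -- The average may be fractional, but its increments along `S` are integers and survive rounding.
  refine ⟨fun x => (∑ n ∈ Finset.range N, birkhoffSum S h n x) / N,
    (continuous_of_discreteTopology (f := fun z : ℤ => z / N)).comp hcont, fun x => ?_⟩
  have hstep : ∑ n ∈ Finset.range N, birkhoffSum S h n x =
      ∑ n ∈ Finset.range N, birkhoffSum S h n (S x) + h x * N := by
    rw [sum_birkhoffSum_apply, hsum, nsmul_eq_mul]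
    ring
  dsimp only
  rw [hstep, Int.add_mul_ediv_right _ _ (by exact_mod_cast hN), add_sub_cancel_left]

end Coboundary

section Permutations

variable {X Y : Type*} {S T : Equiv.Perm X}

lemma semiconj_zpow {σ : Equiv.Perm Y} {L : X → Y} (h : Function.Semiconj L S σ) (n : ℤ) :
    Function.Semiconj L ⇑(S ^ n) ⇑(σ ^ n) := by
  have hinv : Function.Semiconj L ⇑S⁻¹ ⇑σ⁻¹ := h.inverses_right S.right_inv σ.left_inv
  induction n with
  | zero => exact Function.Semiconj.id_right
  | succ n ih => simpa only [zpow_add_one, Equiv.Perm.coe_mul] using ih.comp_right h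
  | pred n ih => simpa only [zpow_sub_one, Equiv.Perm.coe_mul] using ih.comp_right hinv

lemma apply_zpow_of_semiconj_addRight_one {R : Type*} [AddGroupWithOne R] {L : X → R}
    (h : Function.Semiconj L T (Equiv.addRight (1 : R))) (n : ℤ) (x : X) :
    L ((T ^ n) x) = L x + n := by
  simp [(semiconj_zpow h n).eq]

lemma surjective_of_semiconj_addRight_one [Nonempty X] {N : ℕ} {L : X → ZMod N}
    (h : Function.Semiconj L T (Equiv.addRight (1 : ZMod N))) : Function.Surjective L := fun a => by
  obtain ⟨x⟩ := ‹Nonempty X›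
  obtain ⟨n, hn⟩ := ZMod.intCast_surjective (a - L x)
  exact ⟨(T ^ n) x, by rw [apply_zpow_of_semiconj_addRight_one h, hn, add_sub_cancel]⟩

lemma zOrbit_eq_zOrbit_iff {x y : X} : zOrbit S x = zOrbit S y ↔ S.SameCycle x y := by
  refine ⟨fun h => ?_, fun h => Set.ext fun z => ⟨h.symm.trans, h.trans⟩⟩
  have hy : y ∈ zOrbit S y := Equiv.Perm.SameCycle.refl S y
  rwa [← h] at hy

lemma zOrbit_subset_zOrbit (h : ∀ x, T.SameCycle x (S x)) (x : X) : zOrbit S x ⊆ zOrbit T x := by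
  rintro _ ⟨n, rfl⟩
  change T.SameCycle x ((S ^ n) x)
  induction n with
  | zero => exact Equiv.Perm.SameCycle.refl T x
  | succ n ih =>
    rw [add_comm, zpow_one_add, Equiv.Perm.mul_apply]
    exact ih.trans (h _)
  | pred n ih =>
    have hstep := h ((S ^ (-(n : ℤ) - 1)) x)
    rw [← Equiv.Perm.mul_apply, ← zpow_one_add, add_sub_cancel] at hstep
    exact ih.trans hstep.symm

lemma birkhoffSum_comp_of_semiconj {M : Type*} [AddCommMonoid M] {f : X → X} {g : Y → Y}
    {L : X → Y} (h : Function.Semiconj L f g) (q : Y → M) (n : ℕ) (x : X) :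
    birkhoffSum f (q ∘ L) n x = birkhoffSum g q n (L x) :=
  Finset.sum_congr rfl fun k _ => congrArg q ((h.iterate_right k).eq x)

lemma birkhoffSum_card_of_isCycleOn {M : Type*} [Fintype Y] [AddCommMonoid M] {σ : Equiv.Perm Y}
    (hσ : σ.IsCycleOn (Finset.univ : Finset Y)) (q : Y → M) (a : Y) :
    birkhoffSum σ q (Fintype.card Y) a = ∑ b, q b := by
  simp only [birkhoffSum, Equiv.Perm.iterate_eq_pow]
  refine Finset.sum_bij (fun j _ => (σ ^ j) a) (fun _ _ => Finset.mem_univ _) ?_ ?_ fun _ _ => rfl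
  · intro i hi j hj hij
    exact ((hσ.pow_apply_eq_pow_apply (Finset.mem_univ a)).1 hij).eq_of_lt_of_lt
      (Finset.mem_range.1 hi) (Finset.mem_range.1 hj)
  · intro b _
    obtain ⟨i, hi, hib⟩ := hσ.exists_pow_eq (Finset.mem_univ a) (Finset.mem_univ b)
    exact ⟨i, Finset.mem_range.2 hi, hib⟩

lemma pow_apply_eq_pow_birkhoffSum {p : X → ℕ} (hSp : ∀ x, S x = (T ^ p x) x) (n : ℕ) (x : X) :
    (S ^ n) x = (T ^ birkhoffSum S p n x) x := by
  induction n with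
  | zero => simp
  | succ n ih =>
    rw [birkhoffSum_succ, pow_succ', Equiv.Perm.mul_apply, hSp, Equiv.Perm.iterate_eq_pow,
      add_comm, pow_add, Equiv.Perm.mul_apply, ← ih]

end Permutations

section Minimality

variable {X Y : Type*} [TopologicalSpace X] [TopologicalSpace Y] [DiscreteTopology Y]
  {S : Equiv.Perm X} {L : X → Y}

lemma IsMinimalHomeo.exists_zpow_apply_eq (hS : IsMinimalHomeo S) (hL : Continuous L) (x y : X) :
    ∃ n : ℤ, L ((S ^ n) x) = L y := by
  obtain ⟨_, ⟨n, rfl⟩, hn⟩ :=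
    (hS x).exists_mem_open ((isOpen_discrete {L y}).preimage hL) ⟨y, rfl⟩
  exact ⟨n, hn⟩

lemma IsMinimalHomeo.exists_isCycleOn_semiconj [Finite Y] (hS : IsMinimalHomeo S)
    (hL : Continuous L) (hLsurj : Function.Surjective L) {g : Y → Y}
    (hg : Function.Semiconj L S g) :
    ∃ σ : Equiv.Perm Y, σ.IsCycleOn Set.univ ∧ Function.Semiconj L S σ := by
  have hgsurj : Function.Surjective g :=
    Function.Surjective.of_comp (g := L) (hg.comp_eq ▸ hLsurj.comp S.surjective)
  let σ := Equiv.ofBijective g (Finite.surjective_iff_bijective.1 hgsurj)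
  have hσ : Function.Semiconj L S σ := hg
  refine ⟨σ, ⟨σ.bijective.bijOn_univ, fun a _ b _ => ?_⟩, hσ⟩
  obtain ⟨x, rfl⟩ := hLsurj a
  obtain ⟨y, rfl⟩ := hLsurj b
  obtain ⟨n, hn⟩ := hS.exists_zpow_apply_eq hL x y
  exact ⟨n, by rw [← (semiconj_zpow hσ n).eq, hn]⟩

end Minimality

lemma continuous_jump {X : Type*} [TopologicalSpace X] [T2Space X] {S T : Equiv.Perm X}
    (hT : ∀ x, Function.Injective fun n : ℤ => (T ^ n) x) (hTc : Continuous T) (hSc : Continuous S)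
    {p : X → ℕ} {M : ℕ} (hM : ∀ x, p x ≤ M) (hSp : ∀ x, S x = (T ^ p x) x) : Continuous p := by
  have hp : ∀ x n, p x = n ↔ S x = (T ^ n) x := fun x n => by
    refine ⟨fun h => h ▸ hSp x, fun h => ?_⟩
    exact_mod_cast hT x (show (T ^ (p x : ℤ)) x = (T ^ (n : ℤ)) x by
      rw [zpow_natCast, zpow_natCast, ← hSp, h])
  rw [continuous_iff_isClosed]
  intro s _
  have hpre : p ⁻¹' s = ⋃ n ∈ Set.Iic M ∩ s, {x | S x = (T ^ n) x} := by
    ext x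
    simp [← hp, hM]
  rw [hpre]
  refine ((Set.finite_Iic M).inter_of_left s).isClosed_biUnion fun n _ => isClosed_eq hSc ?_
  rw [Equiv.Perm.coe_pow]
  exact hTc.iterate n

section OrbitCounting

lemma ncard_range_of_eq_iff_intCast_eq {α : Type*} {e : ℕ} {φ : ℤ → α}
    (h : ∀ a b : ℤ, φ a = φ b ↔ (a : ZMod e) = b) : (Set.range φ).ncard = e := by
  have hrange : Set.range φ = Set.range fun a : ZMod e => φ a.cast := by
    refine Set.Subset.antisymm ?_ (Set.range_comp_subset_range _ φ)
    rintro _ ⟨b, rfl⟩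
    exact ⟨b, (h _ _).2 (ZMod.intCast_zmod_cast _)⟩
  have hinj : Function.Injective fun a : ZMod e => φ a.cast := fun a b hab => by
    simpa only [ZMod.intCast_zmod_cast] using (h _ _).1 hab
  rw [hrange, Set.ncard_range_of_injective hinj, Nat.card_zmod]

variable {X : Type*} {S T : Equiv.Perm X} {N e : ℕ} {L : X → ZMod N}

lemma zOrbit_zpow_mul_eq_iff (hN : N ≠ 0) (hT : ∀ x, Function.Injective fun n : ℤ => (T ^ n) x)
    (hLT : Function.Semiconj L T (Equiv.addRight (1 : ZMod N)))
    (hLS : ∀ (n : ℤ) x, L ((S ^ n) x) = L x ↔ (N : ℤ) ∣ n) (hST : S ^ N = T ^ (N * e))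
    (x : X) (a b : ℤ) :
    zOrbit S ((T ^ (N * a : ℤ)) x) = zOrbit S ((T ^ (N * b : ℤ)) x) ↔ (a : ZMod e) = b := by
  have hLa : ∀ a : ℤ, L ((T ^ (N * a : ℤ)) x) = L x := fun a => by
    simp [apply_zpow_of_semiconj_addRight_one hLT]
  have hpow : ∀ l : ℤ, (S ^ (N * l : ℤ)) ((T ^ (N * a : ℤ)) x) = (T ^ (N * (e * l + a) : ℤ)) x := by
    intro l
    rw [zpow_mul, zpow_natCast, hST, ← zpow_natCast, ← zpow_mul, ← Equiv.Perm.mul_apply, ← zpow_add]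
    push_cast
    ring_nf
  rw [zOrbit_eq_zOrbit_iff, ZMod.intCast_eq_intCast_iff_dvd_sub]
  constructor
  · rintro ⟨n, hn⟩
    obtain ⟨l, rfl⟩ := (hLS n _).1 (by rw [hn, hLa, hLa])
    rw [hpow] at hn
    have hmul := mul_left_cancel₀ (by exact_mod_cast hN) (hT x hn)
    exact ⟨l, by rw [← hmul, add_sub_cancel_right]⟩
  · rintro ⟨l, hl⟩
    exact ⟨N * l, by rw [hpow, ← hl, sub_add_cancel]⟩

lemma setOf_zOrbit_subset_eq_range (hLT : Function.Semiconj L T (Equiv.addRight (1 : ZMod N)))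
    (hLS : ∀ x y, ∃ n : ℤ, L ((S ^ n) x) = L y) (hST : ∀ x, T.SameCycle x (S x)) (x : X) :
    {O : Set X | (∃ y : X, O = zOrbit S y) ∧ O ⊆ zOrbit T x} =
      Set.range fun a : ℤ => zOrbit S ((T ^ (N * a : ℤ)) x) := by
  ext O
  constructor
  · rintro ⟨⟨y, rfl⟩, hsub⟩
    obtain ⟨n, hn⟩ := hLS y x
    obtain ⟨k, hk⟩ := hsub ⟨n, rfl⟩
    dsimp only at hk
    rw [← hk, apply_zpow_of_semiconj_addRight_one hLT, add_eq_left,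
      ZMod.intCast_zmod_eq_zero_iff_dvd] at hn
    obtain ⟨a, rfl⟩ := hn
    exact ⟨a, zOrbit_eq_zOrbit_iff.2 (hk ▸ Equiv.Perm.sameCycle_zpow_left.2 (.refl S y))⟩
  · rintro ⟨a, rfl⟩
    refine ⟨⟨_, rfl⟩, (zOrbit_subset_zOrbit hST _).trans_eq ?_⟩
    exact zOrbit_eq_zOrbit_iff.2 (Equiv.Perm.sameCycle_zpow_left.2 (.refl T x))

end OrbitCounting

lemma birkhoffSum_jump_eq_mul_orbitNumber {X : Type*} [TopologicalSpace X] {S T : Equiv.Perm X}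
    (hT : ∀ x, Function.Injective fun n : ℤ => (T ^ n) x) (hSmin : IsMinimalHomeo S) {N : ℕ}
    [NeZero N] {L : X → ZMod N} (hL : Continuous L)
    (hLT : Function.Semiconj L T (Equiv.addRight (1 : ZMod N))) {q : ZMod N → ℕ}
    (hSq : ∀ x, S x = (T ^ (q ∘ L) x) x) {c : ℕ} (hc : IsOrbitNumber T S c) (x : X) :
    birkhoffSum S (q ∘ L) N x = N * c := by
  have hg : Function.Semiconj L S fun a => a + q a := fun y => by
    rw [hSq, ← zpow_natCast, apply_zpow_of_semiconj_addRight_one hLT, Int.cast_natCast,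
      Function.comp_apply]
  have : Nonempty X := ⟨x⟩
  obtain ⟨σ, hσ, hLσ⟩ :=
    hSmin.exists_isCycleOn_semiconj hL (surjective_of_semiconj_addRight_one hLT) hg
  rw [← Finset.coe_univ] at hσ
  have hLS : ∀ (n : ℤ) y, L ((S ^ n) y) = L y ↔ (N : ℤ) ∣ n := fun n y => by
    rw [(semiconj_zpow hLσ n).eq, hσ.zpow_apply_eq (Finset.mem_univ _), Finset.card_univ, ZMod.card]
  have hsum : ∀ y, birkhoffSum S (q ∘ L) N y = ∑ a, q a := fun y => by
    rw [birkhoffSum_comp_of_semiconj hLσ, ← birkhoffSum_card_of_isCycleOn hσ q (L y), ZMod.card]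
  have hST : S ^ N = T ^ ∑ a, q a := Equiv.ext fun y => by
    rw [pow_apply_eq_pow_birkhoffSum hSq, hsum]
  obtain ⟨e, he⟩ : N ∣ ∑ a, q a := by
    have hfix := (hLS N x).2 dvd_rfl
    rwa [zpow_natCast, hST, ← zpow_natCast, apply_zpow_of_semiconj_addRight_one hLT, add_eq_left,
      Int.cast_natCast, ZMod.natCast_eq_zero_iff] at hfix
  rw [he] at hST
  have hcard := hc.2 x
  rw [setOf_zOrbit_subset_eq_range hLT (hSmin.exists_zpow_apply_eq hL)
      (fun y => ⟨(q ∘ L) y, by rw [zpow_natCast, ← hSq]⟩) x,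
    ncard_range_of_eq_iff_intCast_eq (zOrbit_zpow_mul_eq_iff (NeZero.ne N) hT hLT hLS hST x)]
    at hcard
  rw [hsum, he, hcard]

namespace IsOdometerData

variable {X : Type*} [TopologicalSpace X] {T : Equiv.Perm X} {m : ℕ → ℕ} {A : ℕ → Set X}

lemma lt_height (h : IsOdometerData T m A) (k : ℕ) : k < m k := by
  have ⟨hm0, _, hgrow, _⟩ := h
  induction k with
  | zero => omega
  | succ k ih => have := hgrow k; omega

lemma neZero_height (h : IsOdometerData T m A) (k : ℕ) : NeZero (m k) :=
  ⟨(k.zero_le.trans_lt (h.lt_height k)).ne'⟩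

lemma exists_mem_image (h : IsOdometerData T m A) (k : ℕ) (x : X) :
    ∃ i < m k, x ∈ ⇑(T ^ i) '' A k := by
  have ⟨_, _, _, _, _, hcover, _⟩ := h
  simpa only [← hcover k, Set.mem_iUnion, exists_prop] using Set.mem_univ x

lemma image_pow_mod (h : IsOdometerData T m A) (k i : ℕ) :
    ⇑(T ^ (i % m k)) '' A k = ⇑(T ^ i) '' A k := by
  have ⟨_, _, _, _, _, _, hreturn, _⟩ := h
  have hperiod : ∀ j, ⇑(T ^ (m k * j)) '' A k = A k := fun j => by
    induction j with
    | zero => simp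
    | succ j ih => rw [mul_add_one, pow_add, Equiv.Perm.coe_mul, Set.image_comp, hreturn, ih]
  conv_rhs => rw [← Nat.mod_add_div i (m k), pow_add, Equiv.Perm.coe_mul, Set.image_comp, hperiod]

lemma eq_of_mem_image_of_mem_image (h : IsOdometerData T m A) {k i j : ℕ} (hi : i < m k)
    (hj : j < m k) {x : X} (hxi : x ∈ ⇑(T ^ i) '' A k) (hxj : x ∈ ⇑(T ^ j) '' A k) : i = j := by
  have ⟨_, _, _, _, hdisj, _⟩ := h
  by_contra hij
  exact Set.disjoint_left.1 (hdisj k i hi j hj hij) hxi hxj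

/-- The index of the level of the `k`-th tower that contains a given point. It is taken modulo the
height of the tower, so that `T` acts on it as translation by one. -/
noncomputable def level (h : IsOdometerData T m A) (k : ℕ) (x : X) : ZMod (m k) :=
  (h.exists_mem_image k x).choose

lemma level_eq_natCast_iff (h : IsOdometerData T m A) {k i : ℕ} {x : X} :
    h.level k x = i ↔ x ∈ ⇑(T ^ i) '' A k := by
  obtain ⟨hlt, hmem⟩ := (h.exists_mem_image k x).choose_spec
  have hmod : i % m k < m k := Nat.mod_lt i (h.neZero_height k).pos
  rw [level, ZMod.natCast_eq_natCast_iff', Nat.mod_eq_of_lt hlt, ← h.image_pow_mod]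
  exact ⟨fun hi => hi ▸ hmem, h.eq_of_mem_image_of_mem_image hlt hmod hmem⟩

lemma semiconj_level (h : IsOdometerData T m A) (k : ℕ) :
    Function.Semiconj (h.level k) T (Equiv.addRight (1 : ZMod (m k))) := fun x => by
  obtain ⟨i, -, hi⟩ := h.exists_mem_image k x
  rw [h.level_eq_natCast_iff.2 hi, Equiv.coe_addRight]
  dsimp only
  rw [← Nat.cast_add_one, h.level_eq_natCast_iff, pow_succ', Equiv.Perm.coe_mul, Set.image_comp]
  exact Set.mem_image_of_mem T hi

lemma continuous_level (h : IsOdometerData T m A) (hT : Continuous T) (k : ℕ) :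
    Continuous (h.level k) := by
  have := h.neZero_height k
  rw [continuous_discrete_rng]
  intro a
  have hpre : h.level k ⁻¹' {a} = ⇑(T ^ (-a).val) ⁻¹' A k := by
    ext x
    have hzero : ∀ y, h.level k y = 0 ↔ y ∈ A k := fun y => by
      simpa using h.level_eq_natCast_iff (i := 0) (x := y)
    rw [Set.mem_preimage, Set.mem_preimage, ← hzero, ← zpow_natCast,
      apply_zpow_of_semiconj_addRight_one (h.semiconj_level k), Int.cast_natCast,
      ZMod.natCast_zmod_val, ← sub_eq_add_neg, sub_eq_zero, Set.mem_singleton_iff]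
  have ⟨_, _, _, hA, _⟩ := h
  rw [hpre, Equiv.Perm.coe_pow]
  exact (hA k).2.isOpen.preimage (hT.iterate _)

lemma zpow_apply_injective (h : IsOdometerData T m A) (x : X) :
    Function.Injective fun n : ℤ => (T ^ n) x := fun a b hab => by
  set k := (b - a).natAbs
  have hlevel := congrArg (h.level k) hab
  simp only [apply_zpow_of_semiconj_addRight_one (h.semiconj_level k), add_right_inj,
    ZMod.intCast_eq_intCast_iff_dvd_sub] at hlevel
  have hlt : |b - a| < m k := by
    rw [Int.abs_eq_natAbs]
    exact_mod_cast h.lt_height k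
  exact (sub_eq_zero.1 (Int.eq_zero_of_abs_lt_dvd hlevel hlt)).symm

lemma level_eq_of_level_succ_eq (h : IsOdometerData T m A) {k : ℕ} {x y : X}
    (hxy : h.level (k + 1) x = h.level (k + 1) y) : h.level k x = h.level k y := by
  have ⟨_, _, _, _, _, _, _, hrefine, _⟩ := h
  obtain ⟨i, hi, hxi⟩ := h.exists_mem_image (k + 1) x
  have hyi := h.level_eq_natCast_iff.1 (hxy ▸ h.level_eq_natCast_iff.2 hxi)
  obtain ⟨j, -, hsub⟩ := hrefine k i hi
  rw [h.level_eq_natCast_iff.2 (hsub hxi), h.level_eq_natCast_iff.2 (hsub hyi)]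

lemma exists_level_ne (h : IsOdometerData T m A) {x y : X} (hxy : x ≠ y) :
    ∃ k, h.level k x ≠ h.level k y := by
  have ⟨_, _, _, _, _, _, _, _, hsep⟩ := h
  obtain ⟨k, hk⟩ := hsep x y hxy
  obtain ⟨i, hi, hxi⟩ := h.exists_mem_image k x
  refine ⟨k, fun heq => hk i hi ⟨hxi, ?_⟩⟩
  rw [← h.level_eq_natCast_iff, ← heq, h.level_eq_natCast_iff.2 hxi]

lemma exists_factorsThrough_level [CompactSpace X] (h : IsOdometerData T m A) (hT : Continuous T)
    {Y : Type*} [TopologicalSpace Y] [DiscreteTopology Y] {p : X → Y} (hp : Continuous p) :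
    ∃ k, p.FactorsThrough (h.level k) := by
  have hcomp : IsCompact {z : X × X | p z.1 ≠ p z.2} :=
    (isClosed_discrete {w : Y × Y | w.1 ≠ w.2}).preimage
      ((hp.comp continuous_fst).prodMk (hp.comp continuous_snd)) |>.isCompact
  have hopen : ∀ k, IsOpen {z : X × X | h.level k z.1 ≠ h.level k z.2} := fun k =>
    isOpen_ne_fun ((h.continuous_level hT k).comp continuous_fst)
      ((h.continuous_level hT k).comp continuous_snd)
  have hmono : Monotone fun k => {z : X × X | h.level k z.1 ≠ h.level k z.2} :=
    monotone_nat_of_le_succ fun k z hz heq => hz (h.level_eq_of_level_succ_eq heq)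
  obtain ⟨k, hk⟩ := hcomp.elim_directed_cover _ hopen (fun z hz =>
    Set.mem_iUnion.2 (h.exists_level_ne fun heq => hz (congrArg p heq))) hmono.directed_le
  refine ⟨k, fun x y hxy => ?_⟩
  by_contra hne
  exact hk (show (x, y) ∈ _ from hne) hxy

end IsOdometerData

/-- If `S` is a minimal bounded speedup of an odometer `(X,T)` with jump
function `p` and orbit number `c`, then `p - c` is an `S`-coboundary. -/
theorem boundedSpeedup_of_odometer_S_coboundary
    {X : Type*} [TopologicalSpace X] [CompactSpace X]
    [TopologicalSpace.MetrizableSpace X] [TotallyDisconnectedSpace X] [PerfectSpace X]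
    [Nonempty X]
    (T : Equiv.Perm X) (hTc : Continuous T) (hTc' : Continuous T.symm)
    (hTmin : IsMinimalHomeo T)
    (hodo : ∃ (m : ℕ → ℕ) (A : ℕ → Set X), IsOdometerData T m A)
    (p : X → ℕ) (hp1 : ∀ x, 1 ≤ p x) (hpbdd : ∃ M : ℕ, ∀ x, p x ≤ M)
    (S : Equiv.Perm X) (hSc : Continuous S) (hSc' : Continuous S.symm)
    (hSp : ∀ x, S x = (T ^ p x) x) (hSmin : IsMinimalHomeo S)
    (c : ℕ) (hc : IsOrbitNumber T S c) :
    ∃ f : X → ℤ, Continuous f ∧ ∀ x : X, (p x : ℤ) - c = f x - f (S x) := by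
  obtain ⟨m, A, h⟩ := hodo
  obtain ⟨M, hM⟩ := hpbdd
  have hp : Continuous p := continuous_jump h.zpow_apply_injective hTc hSc hM hSp
  obtain ⟨k, hk⟩ := h.exists_factorsThrough_level hTc hp
  obtain ⟨q, rfl⟩ := (Function.factorsThrough_iff p).1 hk
  have := h.neZero_height k
  have hsum := birkhoffSum_jump_eq_mul_orbitNumber h.zpow_apply_injective hSmin
    (h.continuous_level hTc k) (h.semiconj_level k) hSp hc
  refine exists_continuous_coboundary_of_birkhoffSum_eq_zero hSc
    (h := fun x => ((q ∘ h.level k) x : ℤ) - c)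
    ((continuous_of_discreteTopology (f := fun n : ℕ => (n : ℤ) - c)).comp hp)
    (NeZero.ne (m k)) fun x => ?_
  simp only [birkhoffSum, Finset.sum_sub_distrib, Finset.sum_const, Finset.card_range] at hsum ⊢
  rw [← Nat.cast_sum, hsum, nsmul_eq_mul, Nat.cast_mul, sub_self]
end
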